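/- arXiv:1911.07993 — 2 statements merged into one kernel-verified Lean document; each statement's English description precedes it below -/
import Mathlib

section
/- Let $\varepsilon > 0$ and $b > 0$. There exist $n_0 \in \mathbb{N}$ and $c > 0$ such that for all $n > n_0$: if $\phi : \ell_1^m \to \ell_\infty^n$ is a linear map with operator norm $\|\phi\| \le 1$, and if the image $\phi(B_1(\ell_1^m))$ of the closed unit ball contains more than $2^{bn}$ points that are pairwise $\varepsilon$-separated in the $\ell_\infty$ norm, then $m \ge 2^{cn}$. -/
open scoped ENNReal

/-- signed vertices -/
def gwP {m n : ℕ} (a : Fin m → Fin n → ℝ) (v : Fin m × Bool) (i : Fin n) : ℝ :=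
  if v.2 then a v.1 i else - a v.1 i

lemma gwP_abs {m n : ℕ} (a : Fin m → Fin n → ℝ) (ha : ∀ j i, |a j i| ≤ 1) (v : Fin m × Bool)
    (i : Fin n) : |gwP a v i| ≤ 1 := by
  unfold gwP
  split_ifs
  · exact ha _ _
  · rw [abs_neg]; exact ha _ _

lemma gw_comb_abs {m n : ℕ} (a : Fin m → Fin n → ℝ) (ha : ∀ j i, |a j i| ≤ 1) (t : Fin m → ℝ)
    (ht : ∑ j, |t j| ≤ 1) (i : Fin n) : |∑ j, t j * a j i| ≤ 1 := by
  refine (Finset.abs_sum_le_sum_abs _ _).trans (le_trans (Finset.sum_le_sum fun j _ => ?_) ht)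
  rw [abs_mul]
  exact mul_le_of_le_one_right (abs_nonneg _) (ha j i)

lemma gw_vertex {m n : ℕ} (hm : 0 < m) (a : Fin m → Fin n → ℝ) (t : Fin m → ℝ)
    (ht : ∑ j, |t j| ≤ 1) (D : Fin n → ℝ) :
    ∃ v, ∑ i, D i * gwP a v i ≤ ∑ i, D i * ∑ j, t j * a j i := by
  have : Nonempty (Fin m) := ⟨⟨0, hm⟩⟩
  obtain ⟨j0, hj0⟩ := Finite.exists_max (fun j => |∑ i, D i * a j i|)
  have h1 : ∑ i, D i * ∑ j, t j * a j i = ∑ j, t j * ∑ i, D i * a j i := by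
    simp only [Finset.mul_sum]
    rw [Finset.sum_comm]
    exact Finset.sum_congr rfl fun _ _ => Finset.sum_congr rfl fun _ _ => by ring
  have h2 : -|∑ i, D i * a j0 i| ≤ ∑ j, t j * ∑ i, D i * a j i := by
    have h3 : |∑ j, t j * ∑ i, D i * a j i| ≤ |∑ i, D i * a j0 i| := by
      refine (Finset.abs_sum_le_sum_abs _ _).trans ?_
      calc ∑ j, |t j * ∑ i, D i * a j i| ≤ ∑ j, |t j| * |∑ i, D i * a j0 i| := by
            refine Finset.sum_le_sum fun j _ => ?_
            rw [abs_mul]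
            exact mul_le_mul_of_nonneg_left (hj0 j) (abs_nonneg _)
        _ = (∑ j, |t j|) * |∑ i, D i * a j0 i| := by rw [Finset.sum_mul]
        _ ≤ _ := mul_le_of_le_one_left (abs_nonneg _) ht
    exact (abs_le.mp h3).1
  rw [h1]
  rcases le_total 0 (∑ i, D i * a j0 i) with h | h
  · refine ⟨(j0, false), le_trans (le_of_eq ?_) h2⟩
    rw [abs_of_nonneg h]
    simp [gwP]
  · refine ⟨(j0, true), le_trans (le_of_eq ?_) h2⟩
    rw [abs_of_nonpos h]
    simp [gwP]

lemma gw_maurey {m n : ℕ} (hm : 0 < m) (a : Fin m → Fin n → ℝ) (ha : ∀ j i, |a j i| ≤ 1)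
    (t : Fin m → ℝ) (ht : ∑ j, |t j| ≤ 1) (k : ℕ) :
    ∃ u : Fin k → Fin m × Bool,
      ∑ i, (∑ l, gwP a (u l) i - k * ∑ j, t j * a j i) ^ 2 ≤ 4 * n * k := by
  induction k with
  | zero => exact ⟨Fin.elim0, by simp⟩
  | succ k ih =>
    obtain ⟨u, hu⟩ := ih
    obtain ⟨v, hv⟩ := gw_vertex hm a t ht (fun i => ∑ l, gwP a (u l) i - k * ∑ j, t j * a j i)
    refine ⟨Fin.cons v u, ?_⟩
    have key : ∀ i, (∑ l, gwP a ((Fin.cons v u : Fin (k+1) → Fin m × Bool) l) i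
        - ((k+1 : ℕ) : ℝ) * ∑ j, t j * a j i) ^ 2
        ≤ (∑ l, gwP a (u l) i - k * ∑ j, t j * a j i) ^ 2
          + 2 * ((∑ l, gwP a (u l) i - k * ∑ j, t j * a j i) * gwP a v i
            - (∑ l, gwP a (u l) i - k * ∑ j, t j * a j i) * ∑ j, t j * a j i) + 4 := by
      intro i
      rw [Fin.sum_univ_succ]
      simp only [Fin.cons_zero, Fin.cons_succ]
      have h1 := abs_le.mp (gwP_abs a ha v i)
      have h2 := abs_le.mp (gw_comb_abs a ha t ht i)
      generalize (∑ j, t j * a j i) = x at *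
      generalize (∑ l, gwP a (u l) i) = y at *
      generalize gwP a v i = p at *
      push_cast
      have : (p - x)^2 ≤ 4 := by nlinarith
      nlinarith
    refine (Finset.sum_le_sum fun i _ => key i).trans ?_
    rw [Finset.sum_add_distrib, Finset.sum_add_distrib, ← Finset.mul_sum, Finset.sum_sub_distrib]
    simp only [Finset.sum_const, Finset.card_univ, Fintype.card_fin, nsmul_eq_mul]
    push_cast
    linarith

lemma gw_count (n M : ℕ) (t A : ℝ) (ht : 0 < t) (ht1 : t ≤ 1) (G : Finset (Fin n → ℤ))
    (hG : ∀ g ∈ G, ∀ i, |g i| ≤ M)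
    (hA : ∀ g ∈ G, ((Finset.univ.filter (fun i => g i ≠ 0)).card : ℝ) ≤ A) :
    (G.card : ℝ) * t ^ A ≤ (1 + 2 * M * t) ^ n := by
  set T : Finset ℤ := Finset.Icc (-(M:ℤ)) M
  let w : ℤ → ℝ := fun z => if z ≠ 0 then t else 1
  have hw : ∀ z, 0 ≤ w z := fun z => by dsimp [w]; split_ifs <;> linarith
  have hT : ∑ z ∈ T, w z = 1 + 2 * M * t := by
    have h0 : (0:ℤ) ∈ T := by simp [T]
    rw [← Finset.add_sum_erase _ _ h0]
    have : ∑ z ∈ T.erase 0, w z = ∑ z ∈ T.erase 0, t :=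
      Finset.sum_congr rfl fun z hz => by simp [w, Finset.ne_of_mem_erase hz]
    rw [this, Finset.sum_const, Finset.card_erase_of_mem h0]
    have hc : T.card - 1 = 2 * M := by simp [T]; omega
    rw [hc]
    simp [w]
  have h1 : ∑ g ∈ Fintype.piFinset (fun _ : Fin n => T), ∏ i, w (g i) = (1 + 2 * M * t) ^ n := by
    rw [← hT, Finset.sum_prod_piFinset]
    simp
  have hsub : G ⊆ Fintype.piFinset (fun _ : Fin n => T) := by
    intro g hg
    rw [Fintype.mem_piFinset]
    intro i
    rw [Finset.mem_Icc]
    exact abs_le.mp (hG g hg i)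
  rw [← h1, ← nsmul_eq_mul, ← Finset.sum_const]
  refine le_trans (Finset.sum_le_sum fun g hg => ?_)
    (Finset.sum_le_sum_of_subset_of_nonneg hsub fun g _ _ => Finset.prod_nonneg fun i _ => hw _)
  have : ∏ i, w (g i) = t ^ ((Finset.univ.filter (fun i => g i ≠ 0)).card : ℝ) := by
    rw [Real.rpow_natCast]
    simp only [w]
    rw [Finset.prod_ite]
    simp
  rw [this]
  exact Real.rpow_le_rpow_of_exponent_ge ht ht1 (hA g hg)

lemma gw_card {m n M k : ℕ} (hm : 0 < m) (hk : 0 < k) (ε t : ℝ) (hε : 0 < ε) (ht : 0 < t)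
    (ht1 : t ≤ 1) (hM : 2 / ε + 1 ≤ M)
    (a : Fin m → Fin n → ℝ) (ha : ∀ j i, |a j i| ≤ 1) (S : Finset (Fin n → ℝ))
    (hS : ∀ x ∈ S, ∃ s : Fin m → ℝ, ∑ j, |s j| ≤ 1 ∧ ∀ i, x i = ∑ j, s j * a j i)
    (hsep : ∀ x ∈ S, ∀ y ∈ S, x ≠ y → ∃ i, ε < |x i - y i|) :
    (S.card : ℝ) * t ^ (16 / (ε ^ 2 * k) * n) ≤ (2 * m : ℝ) ^ k * (1 + 2 * M * t) ^ n := by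
  classical
  have hkR : (0:ℝ) < k := by exact_mod_cast hk
  have hu : ∀ x : Fin n → ℝ, ∃ u : Fin k → Fin m × Bool, x ∈ S →
      ∑ i, (∑ l, gwP a (u l) i - k * x i) ^ 2 ≤ 4 * n * k := by
    intro x
    by_cases hx : x ∈ S
    · obtain ⟨s, hs, hxs⟩ := hS x hx
      obtain ⟨u, hu⟩ := gw_maurey hm a ha s hs k
      exact ⟨u, fun _ => by simpa only [hxs] using hu⟩
    · exact ⟨fun _ => (⟨0, hm⟩, true), fun h => absurd h hx⟩
  choose u hu using hu
  let d : (Fin n → ℝ) → Fin n → ℝ := fun x i => x i - (∑ l, gwP a (u x l) i) / k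
  let g : (Fin n → ℝ) → Fin n → ℤ := fun x i => round (d x i / ε)
  have hr : ∀ x i, |d x i - ε * g x i| ≤ ε / 2 := by
    intro x i
    have h := abs_sub_round (d x i / ε)
    have : d x i - ε * g x i = ε * (d x i / ε - round (d x i / ε)) := by
      simp only [g]; field_simp
    rw [this, abs_mul, abs_of_pos hε]
    nlinarith
  have hinj : Set.InjOn (fun x => (u x, g x)) (S : Set (Fin n → ℝ)) := by
    intro x hx y hy hxy
    by_contra hne
    obtain ⟨i, hi⟩ := hsep x hx y hy hne
    simp only [Prod.mk.injEq] at hxy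
    have h1 := abs_le.mp (hr x i)
    have h2 := abs_le.mp (hr y i)
    have h3 : x i - y i = d x i - d y i := by simp only [d]; rw [hxy.1]; ring
    rw [hxy.2] at h1
    have : |x i - y i| ≤ ε := by rw [h3, abs_le]; constructor <;> linarith
    linarith
  have hd2 : ∀ x ∈ S, ∀ i, |d x i| ≤ 2 := by
    intro x hx i
    obtain ⟨s, hs, hxs⟩ := hS x hx
    have h1 : |x i| ≤ 1 := by rw [hxs]; exact gw_comb_abs a ha s hs i
    have h2 : |(∑ l, gwP a (u x l) i) / k| ≤ 1 := by
      rw [abs_div, abs_of_pos hkR, div_le_one hkR]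
      refine (Finset.abs_sum_le_sum_abs _ _).trans
        ((Finset.sum_le_sum fun l _ => gwP_abs a ha _ _).trans ?_)
      simp
    calc |d x i| ≤ |x i| + |(∑ l, gwP a (u x l) i) / k| := abs_sub _ _
      _ ≤ 2 := by linarith
  have hcount := gw_count n M t (16 / (ε ^ 2 * k) * n) ht ht1 (S.image g)
    (by
      intro f hf i
      obtain ⟨x, hx, rfl⟩ := Finset.mem_image.mp hf
      have h1 := abs_le.mp (hr x i)
      have h2 := abs_le.mp (hd2 x hx i)
      have h3 : ε * |(g x i : ℝ)| ≤ 2 + ε / 2 := by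
        rw [← abs_of_pos hε, ← abs_mul, abs_of_pos hε, abs_le]; constructor <;> linarith
      have h4 : |(g x i : ℝ)| ≤ M := by
        refine le_trans ?_ hM
        have : ε * (2 / ε + 1) = 2 + ε := by field_simp
        by_contra! hlt
        nlinarith
      exact_mod_cast h4)
    (by
      intro f hf
      obtain ⟨x, hx, rfl⟩ := Finset.mem_image.mp hf
      have h1 : ∀ i ∈ Finset.univ.filter (fun i => g x i ≠ 0),
          (ε * k / 2) ^ 2 ≤ (∑ l, gwP a (u x l) i - k * x i) ^ 2 := by
        intro i hi
        have hg : g x i ≠ 0 := (Finset.mem_filter.mp hi).2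
        have h2 : (1:ℝ) ≤ |(g x i : ℝ)| := by exact_mod_cast Int.one_le_abs hg
        have h3 : ε ≤ |ε * (g x i : ℝ)| := by rw [abs_mul, abs_of_pos hε]; nlinarith
        have h4 : ε / 2 ≤ |d x i| := by
          have := hr x i
          have := abs_sub_abs_le_abs_sub (ε * (g x i : ℝ)) (d x i)
          rw [abs_sub_comm (ε * (g x i : ℝ))] at this
          linarith
        have h5 : ∑ l, gwP a (u x l) i - k * x i = - (k * d x i) := by
          simp only [d]; field_simp; ring
        rw [h5, neg_sq, ← sq_abs (k * d x i), abs_mul, abs_of_pos hkR]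
        apply pow_le_pow_left₀ (by positivity)
        nlinarith
      have h2 := (Finset.sum_le_sum h1).trans
        ((Finset.sum_le_sum_of_subset_of_nonneg (Finset.filter_subset _ _)
          fun i _ _ => sq_nonneg _).trans (hu x hx))
      rw [Finset.sum_const, nsmul_eq_mul] at h2
      rw [div_mul_eq_mul_div, le_div_iff₀ (by positivity)]
      refine le_of_mul_le_mul_right ?_ hkR
      nlinarith)
  have hcard : S.card ≤ (2 * m) ^ k * (S.image g).card := by
    have := Finset.card_le_card_of_injOn (s := S)
      (t := (Finset.univ : Finset (Fin k → Fin m × Bool)) ×ˢ S.image g) (fun x => (u x, g x))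
      (by intro x hx; simp only [Finset.coe_product, Set.mem_prod, Finset.mem_coe]
          exact ⟨Finset.mem_univ _, Finset.mem_image_of_mem g hx⟩) hinj
    rw [Finset.card_product] at this
    simpa [mul_comm] using this
  have hcardR : (S.card : ℝ) ≤ (2 * m : ℝ) ^ k * (S.image g).card := by exact_mod_cast hcard
  calc (S.card : ℝ) * t ^ (16 / (ε ^ 2 * k) * n)
      ≤ ((2 * m : ℝ) ^ k * (S.image g).card) * t ^ (16 / (ε ^ 2 * k) * n) :=
        mul_le_mul_of_nonneg_right hcardR (Real.rpow_nonneg ht.le _)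
    _ = (2 * m : ℝ) ^ k * ((S.image g).card * t ^ (16 / (ε ^ 2 * k) * n)) := by ring
    _ ≤ _ := mul_le_mul_of_nonneg_left hcount (by positivity)

theorem glasner_weiss_lemma (ε b : ℝ) (hε : 0 < ε) (hb : 0 < b) :
    ∃ (n₀ : ℕ) (c : ℝ), 0 < c ∧
      ∀ n, n > n₀ → ∀ m : ℕ,
        ∀ φ : (PiLp 1 fun _ : Fin m => ℝ) →L[ℝ] (PiLp ⊤ fun _ : Fin n => ℝ),
          ‖φ‖ ≤ 1 →
          ∀ S : Finset (PiLp ⊤ fun _ : Fin n => ℝ),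
            (↑S : Set (PiLp ⊤ fun _ : Fin n => ℝ)) ⊆ φ '' Metric.closedBall 0 1 →
            (∀ x ∈ S, ∀ y ∈ S, x ≠ y → ε < dist x y) →
            (2 : ℝ) ^ (b * n) < (S.card : ℝ) →
            (2 : ℝ) ^ (c * n) ≤ (m : ℝ) := by
  classical
  obtain ⟨M, hM⟩ := exists_nat_ge (2 / ε + 1)
  have hM0 : (0:ℝ) < M := lt_of_lt_of_le (by positivity) hM
  have hb2 : (1:ℝ) < 2 ^ (b / 4) := Real.one_lt_rpow (by norm_num) (by positivity)
  obtain ⟨t, ht, ht1, htM⟩ : ∃ t : ℝ, 0 < t ∧ t ≤ 1 ∧ 1 + 2 * M * t ≤ 2 ^ (b / 4) := by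
    refine ⟨min 1 ((2 ^ (b / 4) - 1) / (2 * M)), ?_, min_le_left _ _, ?_⟩
    · exact lt_min one_pos (div_pos (by linarith) (by positivity))
    · have := min_le_right 1 (((2:ℝ) ^ (b / 4) - 1) / (2 * M))
      rw [le_div_iff₀ (by positivity)] at this
      linarith
  have hl2 : 0 < Real.log 2 := Real.log_pos (by norm_num)
  obtain ⟨k, hk⟩ := exists_nat_gt (max 0 (64 * (-Real.log t) / (ε ^ 2 * b * Real.log 2)))
  have hkR : (0:ℝ) < k := (le_max_left _ _).trans_lt hk
  have hk0 : 0 < k := by exact_mod_cast hkR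
  have hk1 := ((le_max_right _ _).trans_lt hk).le
  have htk : (2:ℝ) ^ (-(b / 4)) ≤ t ^ (16 / (ε ^ 2 * k)) := by
    rw [Real.rpow_def_of_pos (by norm_num), Real.rpow_def_of_pos ht, Real.exp_le_exp]
    rw [div_le_iff₀ (by positivity)] at hk1
    rw [mul_div_assoc', le_div_iff₀ (by positivity)]
    nlinarith
  obtain ⟨n₀, hn₀⟩ := exists_nat_ge (4 * k / b)
  refine ⟨n₀, b / (4 * k), by positivity, ?_⟩
  intro n hn m φ hφ S hSφ hsep hcard
  have hnR : 4 * k / b ≤ (n:ℝ) := hn₀.trans (by exact_mod_cast hn.le)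
  rw [div_le_iff₀ hb] at hnR
  have hm : 0 < m := by
    rcases Nat.eq_zero_or_pos m with rfl | h
    · exfalso
      have h1 : S.card ≤ 1 := by
        rw [Finset.card_le_one]
        intro x hx y hy
        obtain ⟨x', -, rfl⟩ := hSφ hx
        obtain ⟨y', -, rfl⟩ := hSφ hy
        rw [Subsingleton.elim x' y']
      have h2 : (1:ℝ) ≤ 2 ^ (b * n) := Real.one_le_rpow (by norm_num) (by positivity)
      have h3 : (S.card : ℝ) ≤ 1 := by exact_mod_cast h1
      linarith
    · exact h
  let a : Fin m → Fin n → ℝ := fun j i => φ (PiLp.single 1 j 1) i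
  have ha : ∀ j i, |a j i| ≤ 1 := by
    intro j i
    have h1 : ‖φ (PiLp.single 1 j 1)‖ ≤ 1 := by
      refine (φ.le_opNorm _).trans ?_
      have : ‖(PiLp.single 1 j (1:ℝ) : PiLp 1 fun _ : Fin m => ℝ)‖ = 1 := by simp
      rw [this]; simpa using hφ
    have h2 := PiLp.norm_apply_le (φ (PiLp.single 1 j 1)) i
    exact (Real.norm_eq_abs _ ▸ h2).trans h1
  have hrep : ∀ (s : PiLp 1 fun _ : Fin m => ℝ) i, φ s i = ∑ j, s j * a j i := by
    intro s i
    have h : s = ∑ j, s j • (PiLp.single 1 j (1:ℝ) : PiLp 1 fun _ : Fin m => ℝ) := by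
      ext i
      simp [Pi.single_apply]
    conv_lhs => rw [h]
    simp [a]
  have hinj : Function.Injective (fun x : PiLp ⊤ fun _ : Fin n => ℝ => (fun i => x i)) := by
    intro x y h
    ext i
    exact congrFun h i
  have main := gw_card (k := k) hm hk0 ε t hε ht ht1 hM a ha
    (S.image (fun x => (fun i => x i)))
    (by
      intro x hx
      obtain ⟨y, hy, rfl⟩ := Finset.mem_image.mp hx
      obtain ⟨s, hs, rfl⟩ := hSφ hy
      refine ⟨fun j => s j, ?_, fun i => hrep s i⟩
      rw [mem_closedBall_zero_iff, PiLp.norm_eq_of_L1] at hs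
      simpa using hs)
    (by
      intro x hx y hy hne
      obtain ⟨x, hx', rfl⟩ := Finset.mem_image.mp hx
      obtain ⟨y, hy', rfl⟩ := Finset.mem_image.mp hy
      have h := hsep x hx' y hy' (fun h => hne (by rw [h]))
      by_contra! hle
      rw [PiLp.dist_eq_iSup] at h
      have : (⨆ i, dist (x i) (y i)) ≤ ε := Real.iSup_le (fun i => hle i) hε.le
      linarith)
  rw [Finset.card_image_of_injective _ hinj] at main
  have e1 : (2:ℝ) ^ (-(b / 4) * n) ≤ t ^ (16 / (ε ^ 2 * k) * n) := by
    rw [Real.rpow_mul (by norm_num), Real.rpow_mul ht.le]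
    exact Real.rpow_le_rpow (by positivity) htk (by positivity)
  have e2 : (1 + 2 * M * t) ^ n ≤ (2:ℝ) ^ (b / 4 * n) := by
    rw [Real.rpow_mul (by norm_num), Real.rpow_natCast]
    exact pow_le_pow_left₀ (by positivity) htM n
  have e3 : (2:ℝ) ^ (b * n) * 2 ^ (-(b / 4) * n) ≤ (2 * m : ℝ) ^ k * 2 ^ (b / 4 * n) :=
    calc _ ≤ (S.card : ℝ) * t ^ (16 / (ε ^ 2 * k) * n) :=
          mul_le_mul hcard.le e1 (Real.rpow_nonneg (by norm_num) _) (Nat.cast_nonneg _)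
      _ ≤ _ := main
      _ ≤ _ := mul_le_mul_of_nonneg_left e2 (by positivity)
  have e4 : (2:ℝ) ^ (b / 2 * n) ≤ (2 * m : ℝ) ^ k := by
    have h : (2:ℝ) ^ (b * n) * 2 ^ (-(b / 4) * n) = 2 ^ (b / 2 * n) * 2 ^ (b / 4 * n) := by
      rw [← Real.rpow_add (by norm_num), ← Real.rpow_add (by norm_num)]
      congr 1; ring
    rw [h] at e3
    exact le_of_mul_le_mul_right e3 (by positivity)
  have e5 : (2:ℝ) ^ (b / (2 * k) * n) ≤ 2 * m := by
    refine le_of_pow_le_pow_left₀ hk0.ne' (by positivity) ?_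
    rw [← Real.rpow_natCast, ← Real.rpow_mul (by norm_num)]
    have h : b / (2 * k) * n * k = b / 2 * n := by field_simp
    rw [h]
    exact e4
  have e6 : (2:ℝ) * 2 ^ (b / (4 * k) * n) ≤ 2 ^ (b / (2 * k) * n) := by
    have h : b / (2 * k) * n = b / (4 * k) * n + b / (4 * k) * n := by field_simp; ring
    rw [h, Real.rpow_add (by norm_num)]
    refine mul_le_mul_of_nonneg_right ?_ (by positivity)
    have : (1:ℝ) ≤ b / (4 * k) * n := by
      rw [div_mul_eq_mul_div, le_div_iff₀ (by positivity)]; linarith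
    simpa using Real.rpow_le_rpow_of_exponent_le (x := 2) (by norm_num) this
  linarith
end

section
/- Let $(X,\{f_n\})$ be a NADS. If $h_{top}(\mathcal{M}(X), \{f_n^*\}) > 0$, then $h_{top}(X, \{f_n\}) > 0$. Equivalently, $h_{top}(X,\{f_n\}) = 0$ implies $h_{top}(\mathcal{M}(X),\{f_n^*\}) = 0$. -/
open Filter MeasureTheory

noncomputable section

def compSeq {X : Type*} (f : ℕ → X → X) : ℕ → X → X
  | 0 => id
  | n + 1 => f n ∘ compSeq f n

/-- `E` is an `(n, ε)`-separated set for the nonautonomous system `(X, f)`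
with respect to the distance function `d`. -/
def IsSeparatedSet {X : Type*} (d : X → X → ℝ) (f : ℕ → X → X) (n : ℕ) (ε : ℝ)
    (E : Set X) : Prop :=
  ∀ x ∈ E, ∀ y ∈ E, x ≠ y → ∃ j < n, ε < d (compSeq f j x) (compSeq f j y)

/-- `F` is an `(n, ε)`-spanning set for the nonautonomous system `(X, f)`. -/
def IsSpanningSet {X : Type*} (d : X → X → ℝ) (f : ℕ → X → X) (n : ℕ) (ε : ℝ)
    (F : Set X) : Prop :=
  ∀ x : X, ∃ y ∈ F, ∀ j < n, d (compSeq f j x) (compSeq f j y) < ε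

/-- maximal cardinality of an `(n, ε)`-separated set. -/
def sepNum {X : Type*} (d : X → X → ℝ) (f : ℕ → X → X) (n : ℕ) (ε : ℝ) : ℕ :=
  sSup {c | ∃ E : Finset X, IsSeparatedSet d f n ε ↑E ∧ E.card = c}

/-- minimal cardinality of an `(n, ε)`-spanning set. -/
def spanNum {X : Type*} (d : X → X → ℝ) (f : ℕ → X → X) (n : ℕ) (ε : ℝ) : ℕ :=
  sInf {c | ∃ F : Finset X, IsSpanningSet d f n ε ↑F ∧ F.card = c}

/-- Topological entropy of a nonautonomous dynamical system, via separated sets. -/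
def nadsEntropy {X : Type*} (d : X → X → ℝ) (f : ℕ → X → X) : EReal :=
  ⨆ (ε : ℝ) (_ : 0 < ε),
    atTop.limsup fun n : ℕ => ((Real.log (sepNum d f n ε) / n : ℝ) : EReal)

end

open scoped ENNReal

/-- Uniform finite family of test functions controlling a continuous distance on `𝓜(X)`. -/
theorem nads_test_functions {X : Type*} [MetricSpace X] [CompactSpace X]
    [MeasurableSpace X] [BorelSpace X]
    (d : ProbabilityMeasure X → ProbabilityMeasure X → ℝ)
    (hd : Continuous (fun p : ProbabilityMeasure X × ProbabilityMeasure X => d p.1 p.2))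
    (hd0 : ∀ μ, d μ μ = 0) (ε : ℝ) (hε : 0 < ε) :
    ∃ (G : Finset C(X, ℝ)) (δ : ℝ), 0 < δ ∧ (∀ g ∈ G, ∀ x, 0 ≤ g x ∧ g x ≤ 1) ∧
      ∀ μ ν : ProbabilityMeasure X,
        (∀ g ∈ G, |(∫ x, g x ∂(μ : Measure X)) - ∫ x, g x ∂(ν : Measure X)| ≤ δ) → d μ ν ≤ ε := by
  classical
  have hcont : ∀ g : C(X, ℝ), Continuous
      (fun p : ProbabilityMeasure X × ProbabilityMeasure X =>
        |(∫ x, g x ∂(p.1 : Measure X)) - ∫ x, g x ∂(p.2 : Measure X)|) := by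
    intro g
    have h := ProbabilityMeasure.continuous_integral_boundedContinuousFunction
      (X := X) (BoundedContinuousFunction.mkOfCompact g)
    exact ((h.comp continuous_fst).sub (h.comp continuous_snd)).abs
  have hK : IsCompact {p : ProbabilityMeasure X × ProbabilityMeasure X | ε ≤ d p.1 p.2} :=
    (isClosed_le continuous_const hd).isCompact
  have key : ∀ p ∈ {p : ProbabilityMeasure X × ProbabilityMeasure X | ε ≤ d p.1 p.2},
      ∃ g : C(X, ℝ), (∀ x, 0 ≤ g x ∧ g x ≤ 1) ∧
        0 < |(∫ x, g x ∂(p.1 : Measure X)) - ∫ x, g x ∂(p.2 : Measure X)| := by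
    rintro ⟨μ, ν⟩ hp
    simp only [Set.mem_ofPred_eq] at hp
    by_contra! hcon
    have hμν : μ = ν := by
      apply Subtype.ext
      change (μ : Measure X) = (ν : Measure X)
      apply ext_of_forall_integral_eq_of_IsFiniteMeasure
      intro g
      have hN : 0 < 2 * ‖g‖ + 1 := by positivity
      have h := hcon ⟨fun x => (g x + ‖g‖) / (2 * ‖g‖ + 1), by fun_prop⟩ (by
        intro x
        have h1 := g.norm_coe_le_norm x
        rw [Real.norm_eq_abs, abs_le] at h1
        simp only [ContinuousMap.coe_mk]
        constructor
        · apply div_nonneg <;> linarith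
        · rw [div_le_one hN]; linarith)
      simp only [ContinuousMap.coe_mk] at h
      have h2 := abs_nonpos_iff.mp h
      rw [integral_div, integral_div, integral_add (g.integrable _) (integrable_const _),
        integral_add (g.integrable _) (integrable_const _)] at h2
      simp only [integral_const, probReal_univ, smul_eq_mul, one_mul] at h2
      rw [← sub_div, div_eq_zero_iff] at h2
      rcases h2 with h2 | h2
      · have : (∫ x, g x ∂(μ : Measure X)) = ∫ x, g x ∂(ν : Measure X) := by linarith
        exact this
      · linarith
    rw [hμν, hd0] at hp
    linarith
  choose! g hg01 hgpos using key
  obtain ⟨t, htK, ht⟩ := hK.elim_nhds_subcover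
    (fun p => {q | |(∫ x, g p x ∂(p.1 : Measure X)) - ∫ x, g p x ∂(p.2 : Measure X)| / 2 <
      |(∫ x, g p x ∂(q.1 : Measure X)) - ∫ x, g p x ∂(q.2 : Measure X)|})
    (fun p hp => (isOpen_lt continuous_const (hcont (g p))).mem_nhds (by
      have := hgpos p hp
      simp only [Set.mem_ofPred_eq]; linarith))
  obtain ⟨δ, hδ, hδt⟩ : ∃ δ : ℝ, 0 < δ ∧ ∀ p ∈ t,
      δ ≤ |(∫ x, g p x ∂(p.1 : Measure X)) - ∫ x, g p x ∂(p.2 : Measure X)| / 2 := by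
    rcases t.eq_empty_or_nonempty with h | h
    · exact ⟨1, one_pos, by simp [h]⟩
    · obtain ⟨p0, hp0, hmin⟩ := t.exists_min_image
        (fun p => |(∫ x, g p x ∂(p.1 : Measure X)) - ∫ x, g p x ∂(p.2 : Measure X)| / 2) h
      exact ⟨_, half_pos (hgpos p0 (htK p0 hp0)), hmin⟩
  refine ⟨t.image g, δ, hδ, ?_, ?_⟩
  · intro h hh
    obtain ⟨p, hp, rfl⟩ := Finset.mem_image.mp hh
    exact hg01 p (htK p hp)
  · intro μ ν h
    by_contra! hlt
    have hmem := ht (show (μ, ν) ∈ {p : ProbabilityMeasure X × ProbabilityMeasure X |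
      ε ≤ d p.1 p.2} from hlt.le)
    simp only [Set.mem_iUnion, Set.mem_ofPred_eq] at hmem
    obtain ⟨p, hp, hpq⟩ := hmem
    have h1 := h (g p) (Finset.mem_image_of_mem g hp)
    have h2 := hδt p hp
    linarith

/-- Greedy (derandomised) empirical approximation. -/
theorem nads_empirical {X : Type*} [MeasurableSpace X] (μ : Measure X) [IsProbabilityMeasure μ]
    {I : Type*} [Fintype I] (h : I → X → ℝ) (hi : ∀ i, Integrable (h i) μ)
    (h01 : ∀ i x, 0 ≤ h i x ∧ h i x ≤ 1) (k : ℕ) :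
    ∃ x : Fin k → X, ∑ i, ((∑ a, h i (x a)) - k * ∫ y, h i y ∂μ) ^ 2 ≤ k * Fintype.card I := by
  induction k with
  | zero => exact ⟨Fin.elim0, by simp⟩
  | succ k ih =>
    obtain ⟨x, hx⟩ := ih
    set S : I → ℝ := fun i => (∑ a, h i (x a)) - k * ∫ y, h i y ∂μ with hS
    have hterm : ∀ i ∈ Finset.univ, Integrable (fun y => S i * (h i y - ∫ z, h i z ∂μ)) μ :=
      fun i _ => ((hi i).sub (integrable_const _)).const_mul _
    have hIntg : Integrable (fun y => ∑ i, S i * (h i y - ∫ z, h i z ∂μ)) μ :=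
      integrable_finsetSum _ hterm
    obtain ⟨y, hy⟩ := exists_le_integral hIntg
    rw [integral_finsetSum _ hterm] at hy
    have h0 : ∑ i, ∫ y, S i * (h i y - ∫ z, h i z ∂μ) ∂μ = 0 := by
      apply Finset.sum_eq_zero
      intro i _
      rw [integral_const_mul, integral_sub (hi i) (integrable_const _)]
      simp
    rw [h0] at hy
    refine ⟨Fin.cons y x, ?_⟩
    have hm : ∀ i, 0 ≤ ∫ z, h i z ∂μ ∧ ∫ z, h i z ∂μ ≤ 1 := by
      intro i
      refine ⟨integral_nonneg fun z => (h01 i z).1, ?_⟩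
      have := integral_mono (hi i) (integrable_const (1 : ℝ)) fun z => (h01 i z).2
      simpa using this
    have hstep : ∀ i, ((∑ a, h i ((Fin.cons y x : Fin (k + 1) → X) a))
        - (k + 1 : ℕ) * ∫ y, h i y ∂μ) ^ 2
        ≤ S i ^ 2 + 2 * (S i * (h i y - ∫ z, h i z ∂μ)) + 1 := by
      intro i
      rw [Fin.sum_univ_succ]
      simp only [Fin.cons_zero, Fin.cons_succ]
      have e : (h i y + ∑ a, h i (x a)) - (k + 1 : ℕ) * ∫ y, h i y ∂μ
          = S i + (h i y - ∫ z, h i z ∂μ) := by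
        simp only [hS]; push_cast; ring
      rw [e]
      have h1 := h01 i y
      have h2 := hm i
      have : (h i y - ∫ z, h i z ∂μ) ^ 2 ≤ 1 := by
        rw [sq_le_one_iff_abs_le_one, abs_le]
        constructor <;> linarith
      nlinarith
    calc _ ≤ ∑ i, (S i ^ 2 + 2 * (S i * (h i y - ∫ z, h i z ∂μ)) + 1) :=
          Finset.sum_le_sum fun i _ => hstep i
      _ = ∑ i, S i ^ 2 + 2 * ∑ i, S i * (h i y - ∫ z, h i z ∂μ) + Fintype.card I := by
          rw [Finset.sum_add_distrib, Finset.sum_add_distrib, ← Finset.mul_sum]; simp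
      _ ≤ _ := by push_cast; linarith

/-- Counting sparse words. -/
theorem nads_sparse_count {I : Type*} [Fintype I] [DecidableEq I] (Q : ℕ) (t B : ℝ)
    (ht : 0 < t) (ht1 : t ≤ 1) (W : Finset (I → Option (Fin Q)))
    (hW : ∀ w ∈ W, ((Finset.univ.filter fun i => w i ≠ none).card : ℝ) ≤ B) :
    (W.card : ℝ) ≤ Real.exp (B * Real.log t⁻¹ + Fintype.card I * (Q * t)) := by
  classical
  have h1 : ∑ w : I → Option (Fin Q), ∏ i, (if w i = none then (1 : ℝ) else t)
      = (1 + Q * t) ^ Fintype.card I := by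
    have := Finset.prod_univ_sum (fun _ : I => (Finset.univ : Finset (Option (Fin Q))))
      (fun _ o => if o = none then (1 : ℝ) else t)
    rw [Fintype.piFinset_univ] at this
    rw [← this]
    simp [Fintype.sum_option]
  have h2 : ∀ w ∈ W, Real.exp (- (B * Real.log t⁻¹)) ≤
      ∏ i, (if w i = none then (1 : ℝ) else t) := by
    intro w hw
    have : ∏ i, (if w i = none then (1 : ℝ) else t)
        = t ^ (Finset.univ.filter fun i => w i ≠ none).card := by
      rw [Finset.prod_ite]; simp
    rw [this, ← Real.exp_log (pow_pos ht _), Real.exp_le_exp, Real.log_pow, Real.log_inv]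
    have hl : Real.log t ≤ 0 := Real.log_nonpos ht.le ht1
    nlinarith [hW w hw]
  have h3 : (W.card : ℝ) * Real.exp (- (B * Real.log t⁻¹)) ≤ (1 + Q * t) ^ Fintype.card I := by
    rw [← h1, ← nsmul_eq_mul, ← Finset.sum_const]
    refine (Finset.sum_le_sum h2).trans ?_
    apply Finset.sum_le_sum_of_subset_of_nonneg (Finset.subset_univ _)
    intro w _ _
    apply Finset.prod_nonneg
    intro i _
    split_ifs <;> linarith
  have h4 : (1 + Q * t) ^ Fintype.card I ≤ Real.exp (Fintype.card I * (Q * t)) := by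
    rw [Real.exp_nat_mul]
    apply pow_le_pow_left₀ (by positivity)
    linarith [Real.add_one_le_exp (Q * t)]
  rw [Real.exp_add]
  rw [Real.exp_neg, ← div_eq_mul_inv, div_le_iff₀ (Real.exp_pos _)] at h3
  nlinarith [Real.exp_pos (B * Real.log t⁻¹)]

theorem nads_compSeq_continuous {X : Type*} [TopologicalSpace X] (f : ℕ → X → X)
    (hf : ∀ n, Continuous (f n)) (n : ℕ) : Continuous (compSeq f n) := by
  induction n with
  | zero => exact continuous_id
  | succ n ih => exact (hf n).comp ih

/-- In a compact space, there is a maximal separated set, which spans. -/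
theorem nads_spanning {X : Type*} [MetricSpace X] [CompactSpace X] (f : ℕ → X → X)
    (hf : ∀ n, Continuous (f n)) (n : ℕ) (ε : ℝ) (hε : 0 < ε) :
    ∃ E : Finset X, E.card ≤ sepNum (fun x y : X => dist x y) f n ε ∧
      ∀ x, ∃ y ∈ E, ∀ j < n, dist (compSeq f j x) (compSeq f j y) ≤ ε := by
  classical
  have hc := nads_compSeq_continuous f hf
  set A := {c | ∃ E : Finset X, IsSeparatedSet (fun x y : X => dist x y) f n ε ↑E ∧ E.card = c}
    with hA
  have hopen : ∀ x : X, IsOpen {y | ∀ j < n, dist (compSeq f j x) (compSeq f j y) < ε / 2} := by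
    intro x
    have : {y | ∀ j < n, dist (compSeq f j x) (compSeq f j y) < ε / 2}
        = ⋂ j ∈ Finset.range n, {y | dist (compSeq f j x) (compSeq f j y) < ε / 2} := by
      ext y; simp
    rw [this]
    apply isOpen_biInter_finset
    intro j _
    exact isOpen_lt (continuous_const.dist (hc j)) continuous_const
  obtain ⟨t, ht⟩ := isCompact_univ.elim_finite_subcover
    (fun x : X => {y | ∀ j < n, dist (compSeq f j x) (compSeq f j y) < ε / 2}) hopen (by
      intro x _
      simp only [Set.mem_iUnion]
      exact ⟨x, fun j _ => by simpa using half_pos hε⟩)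
  have hbdd : BddAbove A := by
    refine ⟨t.card, ?_⟩
    rintro c ⟨E, hE, rfl⟩
    have hex : ∀ x : X, ∃ z ∈ t, ∀ j < n, dist (compSeq f j z) (compSeq f j x) < ε / 2 := by
      intro x
      have := ht (Set.mem_univ x)
      simpa using this
    choose z hz hzd using hex
    apply Finset.card_le_card_of_injOn z (fun x _ => hz x)
    intro x hx y hy hxy
    by_contra hne
    obtain ⟨j, hj, hlt⟩ := hE x hx y hy hne
    have h1 := hzd x j hj
    have h2 := hzd y j hj
    rw [← hxy] at h2
    have := dist_triangle_left (compSeq f j x) (compSeq f j y) (compSeq f j (z x))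
    simp only at hlt
    linarith
  have hne : A.Nonempty := ⟨0, ∅, by intro x hx; simp at hx, rfl⟩
  obtain ⟨E, hE, hcard⟩ := Nat.sSup_mem hne hbdd
  refine ⟨E, hcard.le, ?_⟩
  intro x
  by_contra! hcon
  have hxE : x ∉ E := by
    intro hx
    obtain ⟨j, _, hj⟩ := hcon x hx
    rw [dist_self] at hj
    linarith
  have hmem : (insert x E).card ∈ A := by
    refine ⟨insert x E, ?_, rfl⟩
    intro a ha b hb hab
    simp only [Finset.coe_insert, Set.mem_insert_iff, Finset.mem_coe] at ha hb
    rcases ha with rfl | ha <;> rcases hb with rfl | hb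
    · exact absurd rfl hab
    · exact hcon b hb
    · obtain ⟨j, hj, h⟩ := hcon a ha
      exact ⟨j, hj, by simpa [dist_comm] using h⟩
    · exact hE a ha b hb hab
  have := le_csSup hbdd hmem
  rw [Finset.card_insert_of_notMem hxE, hcard] at this
  omega

theorem nads_integral_compSeq {X : Type*} [MetricSpace X]
    [MeasurableSpace X] [BorelSpace X]
    (f : ℕ → X → X) (hf : ∀ n, Continuous (f n)) (μ : ProbabilityMeasure X) (j : ℕ) :
    ((compSeq (fun n (μ : ProbabilityMeasure X) => μ.map ((hf n).aemeasurable)) j μ :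
      ProbabilityMeasure X) : Measure X) = (μ : Measure X).map (compSeq f j) := by
  induction j with
  | zero => simp [compSeq]
  | succ j ih =>
    simp only [compSeq, Function.comp_apply, ProbabilityMeasure.toMeasure_map]
    rw [ih, Measure.map_map (hf j).measurable (nads_compSeq_continuous f hf j).measurable]

/-- Main counting bound. -/
theorem nads_count {X : Type*} [MetricSpace X] [CompactSpace X]
    [MeasurableSpace X] [BorelSpace X]
    (f : ℕ → X → X) (hf : ∀ n, Continuous (f n))
    (G : Finset C(X, ℝ)) (δ r : ℝ) (hδ : 0 < δ) (hr : 0 < r)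
    (hG : ∀ g ∈ G, ∀ x, 0 ≤ g x ∧ g x ≤ 1)
    (hGr : ∀ g ∈ G, ∀ x y, dist x y ≤ r → |g x - g y| ≤ δ)
    (Q : ℕ) (hQ : 1 / δ < Q) (t : ℝ) (ht : 0 < t) (ht1 : t ≤ 1) (k n : ℕ) (hk : 0 < k)
    (M : Finset (ProbabilityMeasure X))
    (hM : ∀ μ ∈ M, ∀ ν ∈ M, μ ≠ ν → ∃ j < n, ∃ g ∈ G,
      4 * δ < |(∫ x, g (compSeq f j x) ∂(μ : Measure X)) -
        ∫ x, g (compSeq f j x) ∂(ν : Measure X)|) :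
    (M.card : ℝ) ≤ (sepNum (fun x y : X => dist x y) f n r : ℝ) ^ k *
      Real.exp ((G.card * n) / (k * δ ^ 2) * Real.log t⁻¹ + (G.card * n) * (Q * t)) := by
  classical
  have hc := nads_compSeq_continuous f hf
  obtain ⟨E, hEc, hE⟩ := nads_spanning f hf n r hr
  let I := {g // g ∈ G} × Fin n
  let h : I → X → ℝ := fun i x => i.1.1 (compSeq f i.2 x)
  have hcI : Fintype.card I = G.card * n := by simp [I]
  have hcont : ∀ i, Continuous (h i) := fun i => i.1.1.continuous.comp (hc _)
  have h01 : ∀ i x, 0 ≤ h i x ∧ h i x ≤ 1 := fun i x => hG _ i.1.2 _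
  have hIntg : ∀ (μ : ProbabilityMeasure X) i, Integrable (h i) (μ : Measure X) := by
    intro μ i
    exact (hcont i).integrable_of_hasCompactSupport (HasCompactSupport.of_compactSpace _)
  choose p hpE hp using hE
  have hpI : ∀ i x, |h i x - h i (p x)| ≤ δ := fun i x =>
    hGr _ i.1.2 _ _ (hp x i.2 i.2.2)
  have hkR : (0 : ℝ) < k := by exact_mod_cast hk
  -- approximants
  have hex : ∀ μ : ProbabilityMeasure X, ∃ y : Fin k → {e // e ∈ E},
      ((Finset.univ.filter fun i : I =>
        2 * δ < |(∑ a, h i (y a)) / k - ∫ z, h i z ∂(μ : Measure X)|).card : ℝ)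
        ≤ (G.card * n) / (k * δ ^ 2) := by
    intro μ
    obtain ⟨x, hx⟩ := nads_empirical (μ : Measure X) h (hIntg μ) h01 k
    refine ⟨fun a => ⟨p (x a), hpE _⟩, ?_⟩
    set Bad := Finset.univ.filter fun i : I =>
        2 * δ < |(∑ a, h i (p (x a))) / k - ∫ z, h i z ∂(μ : Measure X)| with hBad
    have hb : ∀ i ∈ Bad, (k * δ) ^ 2 ≤
        ((∑ a, h i (x a)) - k * ∫ y, h i y ∂(μ : Measure X)) ^ 2 := by
      intro i hi
      have h1 : 2 * δ < |(∑ a, h i (p (x a))) / k - ∫ z, h i z ∂(μ : Measure X)| := by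
        simpa [hBad] using hi
      have h2 : |(∑ a, h i (x a)) - ∑ a, h i (p (x a))| ≤ k * δ := by
        rw [← Finset.sum_sub_distrib]
        refine (Finset.abs_sum_le_sum_abs _ _).trans ?_
        refine (Finset.sum_le_sum fun a _ => hpI i (x a)).trans ?_
        simp
      have h3 : k * (2 * δ) < |(∑ a, h i (p (x a))) - k * ∫ z, h i z ∂(μ : Measure X)| := by
        have : (∑ a, h i (p (x a))) - k * ∫ z, h i z ∂(μ : Measure X)
            = k * ((∑ a, h i (p (x a))) / k - ∫ z, h i z ∂(μ : Measure X)) := by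
          field_simp
        rw [this, abs_mul, abs_of_pos hkR]
        exact mul_lt_mul_of_pos_left h1 hkR
      rw [sq_le_sq, abs_of_pos (by positivity)]
      have h4 := abs_sub_le (∑ a, h i (p (x a))) (∑ a, h i (x a))
        (k * ∫ z, h i z ∂(μ : Measure X))
      rw [abs_sub_comm (∑ a, h i (p (x a))) (∑ a, h i (x a))] at h4
      linarith
    have h5 : (Bad.card : ℝ) * (k * δ) ^ 2 ≤ k * (G.card * n) := by
      rw [← nsmul_eq_mul, ← Finset.sum_const]
      refine (Finset.sum_le_sum hb).trans ?_
      refine (Finset.sum_le_sum_of_subset_of_nonneg (Finset.subset_univ _)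
        fun i _ _ => sq_nonneg _).trans ?_
      refine hx.trans (le_of_eq ?_)
      rw [hcI]; push_cast; rfl
    rw [le_div_iff₀ (by positivity)]
    have h6 : (Bad.card : ℝ) * (k * δ) ^ 2 = k * (Bad.card * (k * δ ^ 2)) := by ring
    rw [h6] at h5
    exact le_of_mul_le_mul_left h5 hkR
  choose y hy using hex
  have hm : ∀ (μ : ProbabilityMeasure X) i,
      0 ≤ ∫ z, h i z ∂(μ : Measure X) ∧ ∫ z, h i z ∂(μ : Measure X) ≤ 1 := by
    intro μ i
    refine ⟨integral_nonneg fun z => (h01 i z).1, ?_⟩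
    have := integral_mono (hIntg μ i) (integrable_const (1 : ℝ)) fun z => (h01 i z).2
    simpa using this
  have hfl : ∀ (μ : ProbabilityMeasure X) i, ⌊(∫ z, h i z ∂(μ : Measure X)) / δ⌋₊ < Q := by
    intro μ i
    rw [Nat.floor_lt (div_nonneg (hm μ i).1 hδ.le)]
    refine lt_of_le_of_lt ?_ hQ
    exact div_le_div_of_nonneg_right (hm μ i).2 hδ.le
  let w : ProbabilityMeasure X → I → Option (Fin Q) := fun μ i =>
    if 2 * δ < |(∑ a, h i (y μ a)) / k - ∫ z, h i z ∂(μ : Measure X)| then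
      some ⟨_, hfl μ i⟩ else none
  have hwnone : ∀ μ i, w μ i ≠ none ↔
      2 * δ < |(∑ a, h i (y μ a)) / k - ∫ z, h i z ∂(μ : Measure X)| := by
    intro μ i
    simp only [w]
    split_ifs with hh <;> simp [hh]
  have hinj : Set.InjOn (fun μ => (y μ, w μ)) (M : Set (ProbabilityMeasure X)) := by
    intro μ hμ ν hν heq
    by_contra hne
    obtain ⟨j, hj, g, hg, hlt⟩ := hM μ hμ ν hν hne
    let i : I := (⟨g, hg⟩, ⟨j, hj⟩)
    have hlt' : 4 * δ < |(∫ z, h i z ∂(μ : Measure X)) - ∫ z, h i z ∂(ν : Measure X)| := hlt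
    simp only [Prod.mk.injEq] at heq
    obtain ⟨hy1, hw1⟩ := heq
    have hwi := congrFun hw1 i
    simp only [w] at hwi
    rw [hy1] at hwi
    split_ifs at hwi with ha hb hb
    · simp only [Option.some.injEq, Fin.mk.injEq] at hwi
      have a1 := Nat.floor_le (div_nonneg (hm μ i).1 hδ.le)
      have a2 := Nat.lt_floor_add_one ((∫ z, h i z ∂(μ : Measure X)) / δ)
      have b1 := Nat.floor_le (div_nonneg (hm ν i).1 hδ.le)
      have b2 := Nat.lt_floor_add_one ((∫ z, h i z ∂(ν : Measure X)) / δ)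
      rw [hwi] at a1 a2
      rw [le_div_iff₀ hδ] at a1 b1
      rw [div_lt_iff₀ hδ] at a2 b2
      rcases lt_abs.mp hlt' with hh | hh <;> linarith
    · push Not at ha hb
      rw [abs_le] at ha hb
      rcases lt_abs.mp hlt' with hh | hh <;> linarith
  have hWc := nads_sparse_count Q t ((G.card * n) / (k * δ ^ 2)) ht ht1 (M.image w) (by
    intro v hv
    obtain ⟨μ, _, rfl⟩ := Finset.mem_image.mp hv
    simp only [hwnone]
    exact hy μ)
  rw [hcI] at hWc
  have hcard : M.card ≤ (E.card) ^ k * (M.image w).card := by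
    have : M.card ≤ ((Finset.univ : Finset (Fin k → {e // e ∈ E})) ×ˢ (M.image w)).card := by
      apply Finset.card_le_card_of_injOn (fun μ => (y μ, w μ)) _ hinj
      intro μ hμ
      simp only [Finset.coe_product, Set.mem_prod, Finset.mem_coe, Finset.mem_univ, true_and]
      exact Finset.mem_image_of_mem w hμ
    simpa [Finset.card_product] using this
  have hcardR : (M.card : ℝ) ≤ (E.card : ℝ) ^ k * ((M.image w).card : ℝ) := by exact_mod_cast hcard
  refine hcardR.trans ?_
  push_cast at hWc
  gcongr

theorem nads_entropy_nonneg {X : Type*} (d : X → X → ℝ) (f : ℕ → X → X) :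
    0 ≤ nadsEntropy d f := by
  unfold nadsEntropy
  refine le_trans ?_ (le_iSup₂ (f := fun (ε : ℝ) (_ : 0 < ε) =>
    atTop.limsup fun n : ℕ => ((Real.log (sepNum d f n ε) / n : ℝ) : EReal)) 1 one_pos)
  refine le_limsup_of_frequently_le (Eventually.frequently (Eventually.of_forall fun n => ?_))
  exact_mod_cast div_nonneg (Real.log_natCast_nonneg _) (Nat.cast_nonneg n)

theorem nads_main {X : Type*} [MetricSpace X] [CompactSpace X]
    [MeasurableSpace X] [BorelSpace X]
    (f : ℕ → X → X) (hf : ∀ n, Continuous (f n))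
    (d : ProbabilityMeasure X → ProbabilityMeasure X → ℝ)
    (hd : Continuous (fun p : ProbabilityMeasure X × ProbabilityMeasure X => d p.1 p.2))
    (hd0 : ∀ μ, d μ μ = 0)
    (h0 : nadsEntropy (fun x y : X => dist x y) f ≤ 0) :
    nadsEntropy d (fun n (μ : ProbabilityMeasure X) => μ.map ((hf n).aemeasurable)) ≤ 0 := by
  classical
  refine iSup₂_le fun ε hε => ?_
  refine le_of_forall_gt_imp_ge_of_dense fun a ha => ?_
  obtain ⟨c, hc0, hca⟩ := EReal.lt_iff_exists_real_btwn.mp ha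
  have hc : (0 : ℝ) < c := by exact_mod_cast hc0
  refine le_trans ?_ hca.le
  obtain ⟨G, δ', hδ', hG, hGd⟩ := nads_test_functions d hd hd0 ε hε
  set δ := δ' / 4 with hδdef
  have hδ : 0 < δ := by positivity
  obtain ⟨r, hr, hGr⟩ : ∃ r : ℝ, 0 < r ∧ ∀ g ∈ G, ∀ x y, dist x y ≤ r → |g x - g y| ≤ δ := by
    have hex : ∀ g : C(X, ℝ), ∃ r : ℝ, 0 < r ∧ ∀ x y, dist x y ≤ r → |g x - g y| ≤ δ := by
      intro g
      have hu := CompactSpace.uniformContinuous_of_continuous g.continuous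
      obtain ⟨s, hs, hs'⟩ := Metric.uniformContinuous_iff.mp hu δ hδ
      refine ⟨s / 2, half_pos hs, fun x y hxy => ?_⟩
      have := hs' (a := x) (b := y) (by linarith)
      rw [Real.dist_eq] at this
      exact this.le
    choose ρ hρ hρ' using hex
    rcases G.eq_empty_or_nonempty with h | h
    · exact ⟨1, one_pos, by simp [h]⟩
    · obtain ⟨g0, hg0, hmin⟩ := G.exists_min_image ρ h
      exact ⟨ρ g0, hρ g0, fun g hg x y hxy => hρ' g x y (hxy.trans (hmin g hg))⟩
  obtain ⟨Q, hQ⟩ := exists_nat_gt (1 / δ)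
  obtain ⟨t, ht, ht1, htc⟩ : ∃ t : ℝ, 0 < t ∧ t ≤ 1 ∧ G.card * (Q * t) ≤ c / 3 := by
    have hD : (0 : ℝ) < G.card * Q + 1 := by positivity
    refine ⟨min 1 (c / 3 / (G.card * Q + 1)), by positivity, min_le_left _ _, ?_⟩
    have h1 := min_le_right 1 (c / 3 / (G.card * Q + 1))
    rw [le_div_iff₀ hD] at h1
    have h2 : 0 < min 1 (c / 3 / (G.card * Q + 1)) := by positivity
    nlinarith
  have hlog : 0 ≤ Real.log t⁻¹ := Real.log_nonneg ((one_le_inv₀ ht).mpr ht1)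
  obtain ⟨k, hk, hkc⟩ : ∃ k : ℕ, 0 < k ∧ G.card / (k * δ ^ 2) * Real.log t⁻¹ ≤ c / 3 := by
    obtain ⟨k, hk⟩ := exists_nat_gt (G.card * Real.log t⁻¹ / (δ ^ 2 * (c / 3)))
    have hk0 : (0 : ℝ) < k := lt_of_le_of_lt (by positivity) hk
    refine ⟨k, by exact_mod_cast hk0, ?_⟩
    rw [div_lt_iff₀ (by positivity)] at hk
    rw [div_mul_eq_mul_div, div_le_iff₀ (by positivity)]
    linarith
  have hkR : (0 : ℝ) < k := by exact_mod_cast hk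
  have hls : atTop.limsup (fun n : ℕ =>
      ((Real.log (sepNum (fun x y : X => dist x y) f n r) / n : ℝ) : EReal))
      < ((c / (3 * k) : ℝ) : EReal) := by
    refine lt_of_le_of_lt ((le_iSup₂ (f := fun (ε : ℝ) (_ : 0 < ε) =>
      atTop.limsup fun n : ℕ => ((Real.log (sepNum (fun x y : X => dist x y) f n ε) / n : ℝ) :
        EReal)) r hr).trans h0) ?_
    have : 0 < c / (3 * k) := by positivity
    exact_mod_cast this
  have hev := eventually_lt_of_limsup_lt hls
  refine limsup_le_of_le (by isBoundedDefault) ?_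
  filter_upwards [hev, eventually_gt_atTop 0] with n hn hn0
  have hnR : (0 : ℝ) < n := by exact_mod_cast hn0
  have hn' : Real.log (sepNum (fun x y : X => dist x y) f n r) / n < c / (3 * k) := by
    exact_mod_cast hn
  rw [div_lt_iff₀ hnR] at hn'
  set s := sepNum (fun x y : X => dist x y) f n r with hs
  have hspow : (s : ℝ) ^ k ≤ Real.exp (c / 3 * n) := by
    have h1 : (s : ℝ) ≤ Real.exp (c / (3 * k) * n) :=
      (Real.le_exp_log _).trans (Real.exp_le_exp.mpr hn'.le)
    calc (s : ℝ) ^ k ≤ Real.exp (c / (3 * k) * n) ^ k := by gcongr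
      _ = Real.exp (c / 3 * n) := by
        rw [← Real.exp_nat_mul]; congr 1; field_simp
  have hbound : ∀ M : Finset (ProbabilityMeasure X),
      IsSeparatedSet d (fun n (μ : ProbabilityMeasure X) => μ.map ((hf n).aemeasurable)) n ε ↑M →
      (M.card : ℝ) ≤ Real.exp (c * n) := by
    intro M hM
    have := nads_count f hf G δ r hδ hr hG hGr Q hQ t ht ht1 k n hk M (by
      intro μ hμ ν hν hne
      obtain ⟨j, hj, hlt⟩ := hM μ hμ ν hν hne
      refine ⟨j, hj, ?_⟩
      by_contra! hcon
      refine absurd (hGd _ _ ?_) (not_le.mpr hlt)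
      intro g hg
      have hg' := hcon g hg
      rw [nads_integral_compSeq f hf μ j, nads_integral_compSeq f hf ν j,
        integral_map (nads_compSeq_continuous f hf j).aemeasurable
          g.continuous.aestronglyMeasurable,
        integral_map (nads_compSeq_continuous f hf j).aemeasurable
          g.continuous.aestronglyMeasurable]
      linarith)
    refine this.trans ?_
    refine (mul_le_mul_of_nonneg_right hspow (Real.exp_pos _).le).trans ?_
    rw [← Real.exp_add, Real.exp_le_exp]
    have e1 : (G.card * n : ℝ) / (k * δ ^ 2) * Real.log t⁻¹
        = (G.card / (k * δ ^ 2) * Real.log t⁻¹) * n := by ring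
    rw [e1]
    nlinarith
  have hsep : (sepNum d (fun n (μ : ProbabilityMeasure X) => μ.map ((hf n).aemeasurable)) n ε : ℝ)
      ≤ Real.exp (c * n) := by
    have hle : sepNum d (fun n (μ : ProbabilityMeasure X) => μ.map ((hf n).aemeasurable)) n ε
        ≤ ⌊Real.exp (c * n)⌋₊ := by
      refine csSup_le ⟨0, ∅, by intro x hx; simp at hx, rfl⟩ ?_
      rintro b ⟨M, hM, rfl⟩
      exact Nat.le_floor (hbound M hM)
    exact (Nat.cast_le.mpr hle).trans (Nat.floor_le (Real.exp_pos _).le)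
  rw [EReal.coe_le_coe_iff, div_le_iff₀ hnR]
  rcases Nat.eq_zero_or_pos
    (sepNum d (fun n (μ : ProbabilityMeasure X) => μ.map ((hf n).aemeasurable)) n ε) with h | h
  · rw [h]; simp; positivity
  · rw [Real.log_le_iff_le_exp (by exact_mod_cast h)]
    exact hsep

theorem pos_induced_entropy_pos {X : Type*} [MetricSpace X] [CompactSpace X]
    [MeasurableSpace X] [BorelSpace X]
    (f : ℕ → X → X) (hf : ∀ n, Continuous (f n))
    (m : MetricSpace (ProbabilityMeasure X))
    (hm : m.toUniformSpace.toTopologicalSpace =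
      (inferInstance : TopologicalSpace (ProbabilityMeasure X))) :
    (0 < nadsEntropy (fun μ ν : ProbabilityMeasure X => @dist _ m.toDist μ ν)
        (fun n μ => μ.map ((hf n).aemeasurable)) →
      0 < nadsEntropy (fun x y : X => dist x y) f) ∧
    (nadsEntropy (fun x y : X => dist x y) f = 0 →
      nadsEntropy (fun μ ν : ProbabilityMeasure X => @dist _ m.toDist μ ν)
        (fun n μ => μ.map ((hf n).aemeasurable)) = 0) := by
  have hd : Continuous (fun p : ProbabilityMeasure X × ProbabilityMeasure X =>
      @dist _ m.toDist p.1 p.2) := by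
    have h := @continuous_dist _ m.toPseudoMetricSpace
    have e : m.toPseudoMetricSpace.toUniformSpace.toTopologicalSpace =
      (inferInstance : TopologicalSpace (ProbabilityMeasure X)) := hm
    rw [e] at h
    exact h
  have hd0 : ∀ μ : ProbabilityMeasure X, @dist _ m.toDist μ μ = 0 :=
    fun μ => @dist_self _ m.toPseudoMetricSpace μ
  have main := nads_main f hf (fun μ ν => @dist _ m.toDist μ ν) hd hd0
  constructor
  · intro h
    by_contra hcon
    exact absurd (main (not_lt.mp hcon)) (not_le.mpr h)
  · intro h
    exact le_antisymm (main h.le) (nads_entropy_nonneg _ _)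
end
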